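/- Let 2 ≤ q < ∞. Then R₊(T_{q+1}) is strictly contained in R₊(T_q): every φ : ℕ → ℂ that belongs to R₊(T_{q+1}) also belongs to R₊(T_q), and the function φ₀ : ℕ → ℂ given by φ₀(n) = (−1/q)^{n/2} for n even and φ₀(n) = 0 for n odd (i.e. φ₀(n) = P_n^{(q)}(0)) belongs to R₊(T_q) but does not belong to R₊(T_{q+1}). -/

import Mathlib

/-!
Planting a branch at every vertex of `T_q` gives `T_{q+1}`, with the original tree isometrically
embedded; restricting kernels along this embedding gives the inclusion.

For `|s| ≤ 1` the function `n ↦ P_n(s)` is positive definite on `T_q` because `P_{d(x,y)}(s)` is the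
Gram matrix of vectors `u_x`, built along the tree rooted at `o`. The vector of a child `x` of `p`
is the sum of a prediction, `s u_p` if `p = o` and `(1 + 1/q) s u_p - (1/q) u_{p'}` if `p` has a
parent `p'`, and of an innovation, where the innovations of the children of `p` are the vertices of
a regular simplex orthogonal to all vectors constructed before. The three-term recurrence of the
`P_n` is what the inner products with a prediction satisfy, and `φ₀(n) = P_n(0)`.

In `T_{q+1}` the `q + 2` neighbours of a vertex are at mutual distance `2`, so positive
definiteness of `φ₀` would force `0 ≤ φ₀(0) + (q + 1) φ₀(2) = -1/q`.
-/

open MeasureTheory Filter Finset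
open scoped ComplexOrder

/-- The polynomials `P_n^{(q)}`. -/
noncomputable def treeP (q : ℕ) : ℕ → ℝ → ℝ
  | 0, _ => 1
  | 1, x => x
  | (n+2), x => (1 + 1/(q:ℝ)) * x * treeP q (n+1) x - (1/(q:ℝ)) * treeP q n x

/-- The polynomials `Q_n^{(q)}`. -/
noncomputable def treeQ (q : ℕ) : ℕ → ℝ → ℝ
  | 0, _ => 1
  | 1, x => (1 + 1/(q:ℝ)) * x
  | (n+2), x => (1 + 1/(q:ℝ)) * x * treeQ q (n+1) x - (1/(q:ℝ)) * treeQ q n x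

/-- A kernel `ψ` on a set `X` is positive definite. -/
def IsPDKernel {X : Type*} (ψ : X → X → ℂ) : Prop :=
  ∀ (n : ℕ) (x : Fin n → X) (z : Fin n → ℂ),
    0 ≤ ∑ i, ∑ j, ψ (x i) (x j) * (starRingEnd ℂ) (z i) * z j

/-- `G` is a `(q+1)`-homogeneous tree: connected, acyclic, every vertex has exactly
`q+1` neighbours. -/
def IsHomTree {V : Type} (G : SimpleGraph V) (q : ℕ) : Prop :=
  G.Connected ∧ G.IsAcyclic ∧ ∀ v : V, (G.neighborSet v).ncard = q + 1

/-- `G` is a homogeneous tree of countably infinite degree. -/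
def IsInfTree {V : Type} (G : SimpleGraph V) : Prop :=
  G.Connected ∧ G.IsAcyclic ∧ ∀ v : V, (G.neighborSet v).Countable ∧ (G.neighborSet v).Infinite

/-- The function `φ₀(n) = (-1/q)^(n/2)` for even `n`, `0` for odd `n`. -/
noncomputable def phi0 (q : ℕ) : ℕ → ℂ := fun n =>
  if Even n then (-(1/(q:ℂ)))^(n/2) else 0

section PositiveDefinite

variable {X Y : Type*}

lemma IsPDKernel.comp {ψ : Y → Y → ℂ} (hψ : IsPDKernel ψ) (f : X → Y) :
    IsPDKernel fun x y => ψ (f x) (f y) :=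
  fun n x => hψ n (f ∘ x)

lemma IsPDKernel.sum_nonneg {ψ : X → X → ℂ} (hψ : IsPDKernel ψ) (s : Finset X) :
    0 ≤ ∑ x ∈ s, ∑ y ∈ s, ψ x y := by
  have h := hψ s.card (fun i => s.equivFin.symm i) fun _ => 1
  simp only [map_one, mul_one] at h
  rw [s.equivFin.symm.sum_comp fun x : s => ∑ j, ψ x (s.equivFin.symm j)] at h
  simp_rw [fun x : s => s.equivFin.symm.sum_comp fun y : s => ψ x y] at h
  rwa [sum_coe_sort s fun x => ∑ y : s, ψ x y,
    sum_congr rfl fun x _ => sum_coe_sort s fun y => ψ x y] at h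

lemma isPDKernel_inner {E : Type*} [NormedAddCommGroup E] [InnerProductSpace ℝ E] (u : X → E) :
    IsPDKernel fun x y => ((inner ℝ (u x) (u y) : ℝ) : ℂ) := by
  intro n x z
  set a : E := ∑ i, (z i).re • u (x i) with ha
  set b : E := ∑ i, (z i).im • u (x i) with hb
  suffices h : ∑ i, ∑ j, ((inner ℝ (u (x i)) (u (x j)) : ℝ) : ℂ) * (starRingEnd ℂ) (z i) * z j =
      ((inner ℝ a a + inner ℝ b b : ℝ) : ℂ) by
    rw [h]
    exact Complex.zero_le_real.2 (add_nonneg real_inner_self_nonneg real_inner_self_nonneg)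
  have him : inner ℝ b a - inner ℝ a b = 0 := sub_eq_zero.2 (real_inner_comm a b)
  apply Complex.ext
  · simp only [ha, hb, Complex.ofReal_re, Complex.re_sum, sum_inner, inner_sum,
      real_inner_smul_left, real_inner_smul_right, ← sum_add_distrib]
    refine sum_congr rfl fun i _ => sum_congr rfl fun j _ => ?_
    simp only [Complex.mul_re, Complex.mul_im, Complex.conj_re, Complex.conj_im,
      Complex.ofReal_re, Complex.ofReal_im, real_inner_comm (u (x i)) (u (x j))]
    ring
  · rw [Complex.ofReal_im, ← him]
    simp only [ha, hb, Complex.im_sum, sum_inner, inner_sum,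
      real_inner_smul_left, real_inner_smul_right, ← sum_sub_distrib]
    refine sum_congr rfl fun i _ => sum_congr rfl fun j _ => ?_
    simp only [Complex.mul_re, Complex.mul_im, Complex.conj_re, Complex.conj_im,
      Complex.ofReal_re, Complex.ofReal_im, real_inner_comm (u (x i)) (u (x j))]
    ring

end PositiveDefinite

section Distance

variable {V W : Type*} {G : SimpleGraph V} {H : SimpleGraph W}

lemma dist_le_dist_of_adj_imp (hG : G.Connected) (hH : H.Connected) {f : W → V}
    (hf : ∀ x y, H.Adj x y → f x = f y ∨ G.Adj (f x) (f y)) (x y : W) :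
    G.dist (f x) (f y) ≤ H.dist x y := by
  obtain ⟨w, hw⟩ := hH.exists_walk_length_eq_dist x y
  rw [← hw]
  clear hw
  induction w with
  | nil => simp
  | @cons a b c hab w ih =>
    have hstep : G.dist (f a) (f b) ≤ 1 := by
      rcases hf a b hab with h | h
      · simp [h]
      · exact (SimpleGraph.dist_eq_one_iff_adj.2 h).le
    have := hG.dist_triangle (u := f a) (v := f b) (w := f c)
    rw [SimpleGraph.Walk.length_cons]
    omega

/-- In a cycle, both neighbours of a vertex of maximal rank would have to be equal. -/
lemma isAcyclic_of_rank (r : V → ℕ)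
    (h : ∀ x y z, G.Adj x y → G.Adj x z → r y ≤ r x → r z ≤ r x → y = z) : G.IsAcyclic := by
  classical
  intro v c hc
  obtain ⟨x, hx, hmax⟩ := c.support.toFinset.exists_max_image r ⟨v, by simp⟩
  simp only [List.mem_toFinset] at hx hmax
  have hcx := hc.rotate hx
  have hle : ∀ y ∈ (c.rotate x hx).support, r y ≤ r x := fun y hy =>
    hmax y ((c.mem_support_rotate_iff x hx).1 hy)
  exact hcx.snd_ne_penultimate <| h x _ _ (SimpleGraph.Walk.adj_snd hcx.not_nil)
    (SimpleGraph.Walk.adj_penultimate hcx.not_nil).symm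
    (hle _ (SimpleGraph.Walk.getVert_mem_support _ _))
    (hle _ (SimpleGraph.Walk.getVert_mem_support _ _))

lemma exists_adj_dist_eq_add_one (hG : G.Connected) {o x : V} (hx : x ≠ o) :
    ∃ p, G.Adj x p ∧ G.dist o x = G.dist o p + 1 := by
  obtain ⟨w, hw⟩ := hG.exists_walk_length_eq_dist o x
  have hnil : ¬ w.Nil := SimpleGraph.Walk.not_nil_of_ne hx.symm
  refine ⟨w.penultimate, (w.adj_penultimate hnil).symm, ?_⟩
  have hlength := SimpleGraph.Walk.length_dropLast_add_one hnil
  have hle := SimpleGraph.dist_le w.dropLast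
  have htriangle := hG.dist_triangle (u := o) (v := w.penultimate) (w := x)
  rw [SimpleGraph.dist_eq_one_iff_adj.2 (w.adj_penultimate hnil)] at htriangle
  omega

lemma length_eq_dist_of_isPath (hG : G.IsTree) {x y : V} {w : G.Walk x y} (hw : w.IsPath) :
    w.length = G.dist x y := by
  obtain ⟨w', hw', hd⟩ := hG.connected.exists_path_of_dist x y
  rw [← hd, (hG.existsUnique_path x y).unique hw hw']

lemma dist_eq_add_of_adj (hG : G.IsTree) {o p x y : V} (hpx : G.Adj p x)
    (ho : G.dist o x = G.dist o p + 1) (hy : G.dist p y = G.dist x y + 1) :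
    G.dist o y = G.dist o x + G.dist x y := by
  obtain ⟨w₁, hw₁⟩ := hG.connected.exists_walk_length_eq_dist o p
  obtain ⟨w₂, hw₂⟩ := hG.connected.exists_walk_length_eq_dist x y
  have h₁ : (w₁.concat hpx).IsPath :=
    SimpleGraph.Walk.isPath_of_length_eq_dist _ (by rw [SimpleGraph.Walk.length_concat, hw₁, ho])
  have h₂ : (w₂.cons hpx).IsPath :=
    SimpleGraph.Walk.isPath_of_length_eq_dist _ (by rw [SimpleGraph.Walk.length_cons, hw₂, hy])
  have h : (w₁.append (w₂.cons hpx)).IsPath := by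
    rw [hG.isAcyclic.isPath_iff_isChain] at h₁ h₂ ⊢
    simp only [SimpleGraph.Walk.edges_concat, SimpleGraph.Walk.edges_cons,
      SimpleGraph.Walk.edges_append, List.concat_eq_append] at h₁ h₂ ⊢
    simpa using h₁.append_overlap (l₃ := w₂.edges) h₂ (by simp)
  rw [← length_eq_dist_of_isPath hG h, SimpleGraph.Walk.length_append, SimpleGraph.Walk.length_cons]
  omega

lemma dist_eq_two_of_adj (hG : G.IsTree) {p x y : V} (hx : G.Adj p x) (hy : G.Adj p y)
    (hxy : x ≠ y) : G.dist x y = 2 := by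
  have hpos := hG.connected.pos_dist_of_ne hxy
  have h := hG.dist_eq_dist_add_one_of_adj x hy
  rw [SimpleGraph.dist_eq_one_iff_adj.2 hx.symm] at h
  omega

lemma eq_of_adj_of_dist_le (hG : G.IsTree) {o x p p' : V} (hp : G.Adj x p) (hp' : G.Adj x p')
    (h : G.dist o p ≤ G.dist o x) (h' : G.dist o p' ≤ G.dist o x) : p = p' := by
  by_contra hne
  have hone := SimpleGraph.dist_eq_one_iff_adj.2 hp'
  have hd := hG.dist_eq_dist_add_one_of_adj o hp
  have hfar := dist_eq_add_of_adj hG (o := o) (y := p') hp.symm (by omega)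
    (by rw [dist_eq_two_of_adj hG hp hp' hne, hone])
  omega

end Distance

section RootedTree

variable {V : Type*} (G : SimpleGraph V) (o : V)

open Classical in
/-- The parent of a vertex `x` in the connected graph `G` rooted at `o`: a neighbour of `x` one
step closer to `o`. The root is its own parent. -/
noncomputable def treeParent (x : V) : V :=
  if h : ∃ p, G.Adj x p ∧ G.dist o x = G.dist o p + 1 then h.choose else x

/-- The children of a vertex `p` of the graph `G` rooted at `o`: its neighbours one step further
away from `o`. -/
noncomputable def treeChildren [G.LocallyFinite] (p : V) : Finset V :=
  {c ∈ G.neighborFinset p | G.dist o c = G.dist o p + 1}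

variable {G o} {p x y : V}

lemma treeParent_spec (hG : G.Connected) (hx : x ≠ o) :
    G.Adj x (treeParent G o x) ∧ G.dist o x = G.dist o (treeParent G o x) + 1 := by
  have h := exists_adj_dist_eq_add_one hG hx
  rw [treeParent, dif_pos h]
  exact h.choose_spec

lemma dist_eq_dist_treeParent_add_one (hG : G.Connected) (hx : x ≠ o) :
    G.dist o x = G.dist o (treeParent G o x) + 1 :=
  (treeParent_spec hG hx).2

lemma eq_treeParent (hG : G.IsTree) (hp : G.Adj x p) (h : G.dist o p ≤ G.dist o x) :
    p = treeParent G o x := by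
  have hx : x ≠ o := by
    rintro rfl
    rw [SimpleGraph.dist_self, SimpleGraph.dist_eq_one_iff_adj.2 hp] at h
    omega
  obtain ⟨hadj, hdist⟩ := treeParent_spec hG.connected hx
  exact eq_of_adj_of_dist_le hG hp hadj h (by omega)

lemma dist_treeParent_add_one (hG : G.IsTree) (hx : x ≠ o)
    (hy : G.dist o y < G.dist o x + G.dist x y) :
    G.dist x y = G.dist (treeParent G o x) y + 1 := by
  obtain ⟨hadj, hdist⟩ := treeParent_spec hG.connected hx
  have hstep := hG.dist_eq_dist_add_one_of_adj y hadj
  rw [G.dist_comm (u := y), G.dist_comm (u := y)] at hstep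
  refine hstep.resolve_right fun h => ?_
  have := dist_eq_add_of_adj hG hadj.symm hdist h
  omega

variable [G.LocallyFinite]

lemma mem_treeChildren : x ∈ treeChildren G o p ↔ G.Adj p x ∧ G.dist o x = G.dist o p + 1 := by
  rw [treeChildren, mem_filter, SimpleGraph.mem_neighborFinset]

lemma mem_treeChildren_iff_treeParent_eq (hG : G.IsTree) :
    x ∈ treeChildren G o p ↔ x ≠ o ∧ treeParent G o x = p := by
  rw [mem_treeChildren]
  constructor
  · rintro ⟨hadj, hdist⟩
    refine ⟨?_, (eq_treeParent hG hadj.symm (by omega)).symm⟩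
    rintro rfl
    simp at hdist
  · rintro ⟨hx, rfl⟩
    exact ⟨(treeParent_spec hG.connected hx).1.symm, (treeParent_spec hG.connected hx).2⟩

lemma mem_treeChildren_treeParent (hG : G.IsTree) (hx : x ≠ o) :
    x ∈ treeChildren G o (treeParent G o x) :=
  (mem_treeChildren_iff_treeParent_eq hG).2 ⟨hx, rfl⟩

lemma card_treeChildren_root : #(treeChildren G o o) = G.degree o := by
  rw [treeChildren, filter_true_of_mem, SimpleGraph.card_neighborFinset_eq_degree]
  intro c hc
  rw [SimpleGraph.dist_self, zero_add, SimpleGraph.dist_eq_one_iff_adj]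
  simpa using hc

lemma card_treeChildren_add_one (hG : G.IsTree) (hp : p ≠ o) :
    #(treeChildren G o p) + 1 = G.degree p := by
  classical
  obtain ⟨hadj, hdist⟩ := treeParent_spec hG.connected hp
  have hmem : treeParent G o p ∉ treeChildren G o p := by
    rw [mem_treeChildren]
    omega
  have hinsert : insert (treeParent G o p) (treeChildren G o p) = G.neighborFinset p := by
    ext c
    rw [mem_insert, mem_treeChildren, SimpleGraph.mem_neighborFinset]
    refine ⟨?_, fun hc => ?_⟩
    · rintro (rfl | hc)
      exacts [hadj, hc.1]
    · rcases hG.dist_eq_dist_add_one_of_adj o hc with h | h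
      · exact .inl (eq_treeParent hG hc (by omega))
      · exact .inr ⟨hc, h⟩
  rw [← SimpleGraph.card_neighborFinset_eq_degree, ← hinsert, card_insert_of_notMem hmem]

end RootedTree

section Centred

open scoped RealInnerProductSpace

variable {ι E : Type*} [NormedAddCommGroup E] [InnerProductSpace ℝ E]

/-- The difference between `b c` and the barycentre of the family `b` over `C`. For orthonormal
`b`, these are the vertices of a regular simplex centred at the origin. -/
noncomputable def centred (b : ι → E) (C : Finset ι) (c : ι) : E :=
  b c - (#C : ℝ)⁻¹ • ∑ d ∈ C, b d

variable {b : ι → E} {C : Finset ι} {c d : ι}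

lemma inner_centred_eq_zero {v : E} (hv : ∀ d ∈ C, ⟪b d, v⟫ = 0) (hc : c ∈ C) :
    ⟪centred b C c, v⟫ = 0 := by
  rw [centred, inner_sub_left, real_inner_smul_left, sum_inner, sum_eq_zero hv, hv c hc]
  simp

lemma inner_orthonormal_centred [DecidableEq ι] (hb : Orthonormal ℝ b) (hd : d ∈ C) :
    ⟪b d, centred b C c⟫ = (if d = c then 1 else 0) - (#C : ℝ)⁻¹ := by
  simp [centred, inner_sub_right, real_inner_smul_right, inner_sum, orthonormal_iff_ite.1 hb, hd]

lemma inner_centred_centred [DecidableEq ι] (hb : Orthonormal ℝ b) (hc : c ∈ C) (hd : d ∈ C) :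
    ⟪centred b C c, centred b C d⟫ = (if c = d then 1 else 0) - (#C : ℝ)⁻¹ := by
  have hC : (#C : ℝ) ≠ 0 := Nat.cast_ne_zero.2 (card_ne_zero_of_mem hc)
  have hsum : ∑ e ∈ C, ⟪b e, centred b C d⟫ = 0 := by
    rw [sum_congr rfl fun e he => inner_orthonormal_centred hb he]
    simp [hd, hC]
  rw [centred, inner_sub_left, real_inner_smul_left, sum_inner, hsum, mul_zero, sub_zero,
    inner_orthonormal_centred hb hc]

end Centred

section TreeVector

open scoped RealInnerProductSpace

variable {V E : Type*} [NormedAddCommGroup E] [InnerProductSpace ℝ E]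
variable (G : SimpleGraph V) [G.LocallyFinite] (o : V) (q : ℕ) (s : ℝ) (b : V → E)

/-- The component of the vector of `x ≠ o` which is orthogonal to all vectors of smaller depth.
Its scale is dictated by two children of the same vertex, whose vectors have inner product
`P_2(s)` and differ only in their innovations. -/
noncomputable def treeInnovation (x : V) : E :=
  √(1 - treeP q 2 s) • centred b (treeChildren G o (treeParent G o x)) x

/-- `treeVector` as a function of the depth of the vertex. It satisfies the recurrence of the
polynomials `treeP` along every geodesic issuing from `o`, up to innovations. -/
noncomputable def treeVectorAtDepth : ℕ → V → E
  | 0, x => b x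
  | 1, x => s • treeVectorAtDepth 0 (treeParent G o x) + treeInnovation G o q s b x
  | n + 2, x =>
    ((1 + 1 / (q : ℝ)) * s) • treeVectorAtDepth (n + 1) (treeParent G o x) -
      (1 / (q : ℝ)) • treeVectorAtDepth n (treeParent G o (treeParent G o x)) +
      treeInnovation G o q s b x

/-- The vectors with Gram matrix `treeP q (G.dist x y) s` when `G` is a `(q+1)`-homogeneous tree,
built from an orthonormal family `b`. -/
noncomputable def treeVector (x : V) : E :=
  treeVectorAtDepth G o q s b (G.dist o x) x

open Classical in
/-- The part common to the vectors of all children of `p`. -/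
noncomputable def treePrediction (p : V) : E :=
  if p = o then s • treeVector G o q s b o
  else ((1 + 1 / (q : ℝ)) * s) • treeVector G o q s b p -
    (1 / (q : ℝ)) • treeVector G o q s b (treeParent G o p)

variable {G o q s b} {c d p x y : V}

lemma treeVector_root : treeVector G o q s b o = b o := by
  rw [treeVector, SimpleGraph.dist_self, treeVectorAtDepth]

lemma treeVector_eq_add (hG : G.Connected) (hx : x ≠ o) :
    treeVector G o q s b x =
      treePrediction G o q s b (treeParent G o x) + treeInnovation G o q s b x := by
  have hdist := dist_eq_dist_treeParent_add_one hG hx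
  rw [treeVector, hdist, treePrediction]
  split_ifs with hp
  · rw [hp, SimpleGraph.dist_self, treeVectorAtDepth, hp, treeVector, SimpleGraph.dist_self]
  · rw [treeVector, treeVector, dist_eq_dist_treeParent_add_one hG hp, treeVectorAtDepth]

lemma inner_treePrediction_eq_zero (hG : G.Connected) {v : E}
    (hv : ∀ z, G.dist o z ≤ G.dist o p → ⟪v, treeVector G o q s b z⟫ = 0) :
    ⟪v, treePrediction G o q s b p⟫ = 0 := by
  rw [treePrediction]
  split_ifs with hp
  · rw [real_inner_smul_right, hv o (by simp), mul_zero]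
  · have hdist := dist_eq_dist_treeParent_add_one hG hp
    rw [inner_sub_right, real_inner_smul_right, real_inner_smul_right, hv p le_rfl,
      hv (treeParent G o p) (by omega), mul_zero, mul_zero, sub_zero]

lemma inner_basis_treeVector_eq_zero (hG : G.IsTree) (hb : Orthonormal ℝ b) (hc : c ≠ o)
    (hx : G.dist o x ≤ G.dist o c) (hxc : x ∉ treeChildren G o (treeParent G o c)) :
    ⟪b c, treeVector G o q s b x⟫ = 0 := by
  induction hn : G.dist o x using Nat.strong_induction_on generalizing x with
  | _ n ih =>
    by_cases hxo : x = o
    · rw [hxo, treeVector_root, hb.inner_eq_zero hc]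
    have hcdist := dist_eq_dist_treeParent_add_one hG.connected hc
    have hxdist := dist_eq_dist_treeParent_add_one hG.connected hxo
    have hprediction : ⟪b c, treePrediction G o q s b (treeParent G o x)⟫ = 0 :=
      inner_treePrediction_eq_zero hG.connected fun z hz =>
        ih (G.dist o z) (by omega) (by omega) (fun h => by have := (mem_treeChildren.1 h).2; omega)
          rfl
    have hcC : c ∉ treeChildren G o (treeParent G o x) := fun h =>
      hxc <| by
        rw [((mem_treeChildren_iff_treeParent_eq hG).1 h).2]
        exact mem_treeChildren_treeParent hG hxo
    have hinnovation : ⟪b c, treeInnovation G o q s b x⟫ = 0 := by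
      have hne : ∀ d ∈ treeChildren G o (treeParent G o x), ⟪b d, b c⟫ = 0 := fun d hd =>
        hb.inner_eq_zero (ne_of_mem_of_not_mem hd hcC)
      rw [treeInnovation, real_inner_smul_right, real_inner_comm,
        inner_centred_eq_zero hne (mem_treeChildren_treeParent hG hxo), mul_zero]
    rw [treeVector_eq_add hG.connected hxo, inner_add_right, hprediction, hinnovation, add_zero]

lemma inner_treeInnovation_treeVector_eq_zero (hG : G.IsTree) (hb : Orthonormal ℝ b) (hx : x ≠ o)
    (hy : G.dist o y ≤ G.dist o x) (hyx : y ∉ treeChildren G o (treeParent G o x)) :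
    ⟪treeInnovation G o q s b x, treeVector G o q s b y⟫ = 0 := by
  have hbasis : ∀ d ∈ treeChildren G o (treeParent G o x), ⟪b d, treeVector G o q s b y⟫ = 0 := by
    intro d hd
    obtain ⟨hdo, hdx⟩ := (mem_treeChildren_iff_treeParent_eq hG).1 hd
    have hddist := dist_eq_dist_treeParent_add_one hG.connected hdo
    have hxdist := dist_eq_dist_treeParent_add_one hG.connected hx
    rw [hdx] at hddist
    exact inner_basis_treeVector_eq_zero hG hb hdo (by omega) (by rwa [hdx])
  rw [treeInnovation, real_inner_smul_left,
    inner_centred_eq_zero hbasis (mem_treeChildren_treeParent hG hx), mul_zero]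

lemma inner_treeInnovation_treePrediction_eq_zero (hG : G.IsTree) (hb : Orthonormal ℝ b)
    (hx : x ≠ o) :
    ⟪treeInnovation G o q s b x, treePrediction G o q s b (treeParent G o x)⟫ = 0 := by
  have hxdist := dist_eq_dist_treeParent_add_one hG.connected hx
  refine inner_treePrediction_eq_zero hG.connected fun z hz =>
    inner_treeInnovation_treeVector_eq_zero hG hb hx (by omega) fun h => ?_
  have := (mem_treeChildren.1 h).2
  omega

lemma inner_treeInnovation_treeInnovation [DecidableEq V] (hG : G.IsTree) (hb : Orthonormal ℝ b)
    (hs : treeP q 2 s ≤ 1) (hx : x ≠ o) (hy : y ≠ o) (hxy : treeParent G o x = treeParent G o y) :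
    ⟪treeInnovation G o q s b x, treeInnovation G o q s b y⟫ =
      (1 - treeP q 2 s) *
        ((if x = y then 1 else 0) - (#(treeChildren G o (treeParent G o y)) : ℝ)⁻¹) := by
  rw [treeInnovation, treeInnovation, hxy, real_inner_smul_left, real_inner_smul_right,
    inner_centred_centred hb (hxy ▸ mem_treeChildren_treeParent hG hx)
      (mem_treeChildren_treeParent hG hy), ← mul_assoc,
    Real.mul_self_sqrt (sub_nonneg.2 hs)]

lemma inner_treePrediction_treeVector (hG : G.IsTree)
    (hgram : ∀ z, G.dist o z ≤ G.dist o p →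
      ⟪treeVector G o q s b z, treeVector G o q s b y⟫ = treeP q (G.dist z y) s)
    (hy : G.dist o y ≤ G.dist o p + 1) (hyp : y ∉ treeChildren G o p) :
    ⟪treePrediction G o q s b p, treeVector G o q s b y⟫ = treeP q (G.dist p y + 1) s := by
  have hdist : y ≠ p → G.dist o y < G.dist o p + G.dist p y := fun hne => by
    have hpos := hG.connected.pos_dist_of_ne hne.symm
    have hadj : G.dist p y = 1 → G.dist o y ≠ G.dist o p + 1 := fun h h' =>
      hyp (mem_treeChildren.2 ⟨SimpleGraph.dist_eq_one_iff_adj.1 h, h'⟩)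
    omega
  rw [treePrediction]
  split_ifs with hp
  · have hyo : y = o := by
      by_contra hne
      have := hdist (hp ▸ hne)
      rw [hp, SimpleGraph.dist_self, zero_add] at this
      exact lt_irrefl _ this
    rw [real_inner_smul_left, hgram o (by simp), hp, hyo, SimpleGraph.dist_self, treeP, treeP,
      mul_one]
  have hpdist := dist_eq_dist_treeParent_add_one hG.connected hp
  rw [inner_sub_left, real_inner_smul_left, real_inner_smul_left, hgram p le_rfl,
    hgram _ (by omega)]
  by_cases hyp' : y = p
  · rw [hyp', G.dist_comm (u := treeParent G o p),
      SimpleGraph.dist_eq_one_iff_adj.2 (treeParent_spec hG.connected hp).1,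
      SimpleGraph.dist_self, treeP, treeP]
    ring
  · rw [dist_treeParent_add_one hG hp (hdist hyp'), treeP]

lemma inner_treePrediction_self (hG : G.IsTree) (hq : q ≠ 0) (hdeg : G.degree p = q + 1)
    (hgram : ∀ x y, G.dist o x ≤ G.dist o p → G.dist o y ≤ G.dist o p →
      ⟪treeVector G o q s b x, treeVector G o q s b y⟫ = treeP q (G.dist x y) s) :
    ⟪treePrediction G o q s b p, treePrediction G o q s b p⟫ =
      treeP q 2 s + (1 - treeP q 2 s) * (#(treeChildren G o p) : ℝ)⁻¹ := by
  have hq' : (q : ℝ) ≠ 0 := Nat.cast_ne_zero.2 hq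
  rw [treePrediction]
  split_ifs with hp
  · subst hp
    have hcard : (#(treeChildren G p p) : ℝ) = q + 1 := by
      rw [card_treeChildren_root, hdeg, Nat.cast_add_one]
    rw [real_inner_smul_left, real_inner_smul_right, hgram p p le_rfl le_rfl,
      SimpleGraph.dist_self, hcard]
    simp only [treeP]
    field_simp
    ring
  · have hcard : #(treeChildren G o p) = q := by
      have := card_treeChildren_add_one hG hp
      omega
    obtain ⟨hadj, hdist⟩ := treeParent_spec hG.connected hp
    have hpp := hgram p p le_rfl le_rfl
    have hpp' := hgram p (treeParent G o p) le_rfl (by omega)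
    have hp'p' := hgram (treeParent G o p) (treeParent G o p) (by omega) (by omega)
    rw [SimpleGraph.dist_self] at hpp hp'p'
    rw [SimpleGraph.dist_eq_one_iff_adj.2 hadj] at hpp'
    simp only [inner_sub_left, inner_sub_right, real_inner_smul_left, real_inner_smul_right,
      real_inner_comm (treeVector G o q s b p), hpp, hpp', hp'p', hcard, treeP]
    field_simp
    ring

lemma treeP_two_le_one (hs : s ^ 2 ≤ 1) : treeP q 2 s ≤ 1 := by
  have hq : 0 ≤ 1 / (q : ℝ) := by positivity
  simp only [treeP]
  nlinarith

lemma inner_treeVector_of_treeParent_eq (hG : G.IsTree) (hq : q ≠ 0) (hb : Orthonormal ℝ b)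
    (hs : s ^ 2 ≤ 1) (hx : x ≠ o) (hy : y ≠ o) (hxp : treeParent G o x = p)
    (hyp : treeParent G o y = p) (hdeg : G.degree p = q + 1)
    (hgram : ∀ x y, G.dist o x ≤ G.dist o p → G.dist o y ≤ G.dist o p →
      ⟪treeVector G o q s b x, treeVector G o q s b y⟫ = treeP q (G.dist x y) s) :
    ⟪treeVector G o q s b x, treeVector G o q s b y⟫ = treeP q (G.dist x y) s := by
  classical
  have hx_pred := inner_treeInnovation_treePrediction_eq_zero (q := q) (s := s) hG hb hx
  have hy_pred := inner_treeInnovation_treePrediction_eq_zero (q := q) (s := s) hG hb hy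
  rw [hxp] at hx_pred
  rw [hyp, real_inner_comm] at hy_pred
  rw [treeVector_eq_add hG.connected hx, treeVector_eq_add hG.connected hy, hxp, hyp,
    inner_add_left, inner_add_right, inner_add_right, hx_pred, hy_pred,
    inner_treePrediction_self hG hq hdeg hgram,
    inner_treeInnovation_treeInnovation hG hb (treeP_two_le_one hs) hx hy (hxp.trans hyp.symm),
    hyp]
  split_ifs with hxy
  · rw [hxy, SimpleGraph.dist_self, treeP]
    ring
  · rw [dist_eq_two_of_adj hG (hxp ▸ (treeParent_spec hG.connected hx).1.symm)
      (hyp ▸ (treeParent_spec hG.connected hy).1.symm) hxy]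
    ring

theorem inner_treeVector_treeVector (hG : G.IsTree) (hdeg : G.IsRegularOfDegree (q + 1))
    (hq : q ≠ 0) (hb : Orthonormal ℝ b) (hs : s ^ 2 ≤ 1) (x y : V) :
    ⟪treeVector G o q s b x, treeVector G o q s b y⟫ = treeP q (G.dist x y) s := by
  induction hn : G.dist o x + G.dist o y using Nat.strong_induction_on generalizing x y with
  | _ n ih =>
    wlog hyx : G.dist o y ≤ G.dist o x generalizing x y
    · rw [real_inner_comm, SimpleGraph.dist_comm]
      exact this y x (by omega) (by omega)
    by_cases hx : x = o
    · have hy : y = o := by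
        by_contra hy
        have := hG.connected.pos_dist_of_ne (Ne.symm hy)
        rw [hx, SimpleGraph.dist_self] at hyx
        omega
      rw [hx, hy, treeVector_root, real_inner_self_eq_norm_sq, hb.norm_eq_one, one_pow,
        SimpleGraph.dist_self, treeP]
    have hxdist := dist_eq_dist_treeParent_add_one hG.connected hx
    by_cases hyC : y ∈ treeChildren G o (treeParent G o x)
    · obtain ⟨hy, hparent⟩ := (mem_treeChildren_iff_treeParent_eq hG).1 hyC
      have hydist := dist_eq_dist_treeParent_add_one hG.connected hy
      rw [hparent] at hydist
      exact inner_treeVector_of_treeParent_eq hG hq hb hs hx hy rfl hparent (hdeg _)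
        fun z w hz hw => ih _ (by omega) z w rfl
    · have hxy : G.dist o y < G.dist o x + G.dist x y := by
        have := hG.connected.pos_dist_of_ne (u := x) (v := y)
          (by rintro rfl; exact hyC (mem_treeChildren_treeParent hG hx))
        omega
      rw [treeVector_eq_add hG.connected hx, inner_add_left,
        inner_treeInnovation_treeVector_eq_zero hG hb hx hyx hyC, add_zero,
        inner_treePrediction_treeVector hG (fun z hz => ih _ (by omega) z y rfl) (by omega) hyC,
        dist_treeParent_add_one hG hx hxy]

end TreeVector

section HomTree

variable {V : Type} {G : SimpleGraph V} {n q : ℕ}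

lemma IsHomTree.isTree (hG : IsHomTree G n) : G.IsTree := ⟨hG.1, hG.2.1⟩

/-- Local finiteness of a homogeneous tree. It holds because the cardinality `n + 1`, being
nonzero, is not the junk value that `Set.ncard` takes on infinite sets. -/
noncomputable abbrev IsHomTree.locallyFinite (hG : IsHomTree G n) : G.LocallyFinite := fun v =>
  (Set.finite_of_ncard_ne_zero (by rw [hG.2.2 v]; exact n.succ_ne_zero)).fintype

lemma IsHomTree.isRegularOfDegree [G.LocallyFinite] (hG : IsHomTree G n) :
    G.IsRegularOfDegree (n + 1) := fun v => by
  rw [← SimpleGraph.card_neighborSet_eq_degree, ← hG.2.2 v, Set.ncard_eq_toFinset_card',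
    Set.toFinset_card]

theorem isPDKernel_treeP (hq : q ≠ 0) (hG : IsHomTree G q) {s : ℝ} (hs : s ^ 2 ≤ 1) :
    IsPDKernel fun x y => (treeP q (G.dist x y) s : ℂ) := by
  let := hG.locallyFinite
  obtain ⟨o⟩ := hG.1.nonempty
  have hb : Orthonormal ℝ
      (default : HilbertBasis V ℝ (lp (fun _ : V => ℝ) 2)) := HilbertBasis.orthonormal _
  simp_rw [← inner_treeVector_treeVector (o := o) hG.isTree hG.isRegularOfDegree hq hb hs]
  exact isPDKernel_inner _

lemma phi0_eq_treeP_zero (q n : ℕ) : phi0 q n = treeP q n 0 := by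
  induction n using Nat.twoStepInduction with
  | zero => simp [phi0, treeP]
  | one => simp [phi0, treeP]
  | more n ih _ =>
    rw [treeP, mul_zero, zero_mul, zero_sub, Complex.ofReal_neg, Complex.ofReal_mul, ← ih]
    simp only [phi0, Nat.even_add, even_two, iff_true, Nat.add_div_right _ two_pos, pow_succ]
    split_ifs <;> push_cast <;> ring

theorem isPDKernel_phi0 (hq : q ≠ 0) (hG : IsHomTree G q) :
    IsPDKernel fun x y => phi0 q (G.dist x y) := by
  simp_rw [phi0_eq_treeP_zero]
  exact isPDKernel_treeP hq hG (by norm_num)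

/-- The neighbours of a vertex are at mutual distance `2`, so their sum of kernel values is
`(n + 1) (φ 0 + n φ 2)`. -/
lemma IsHomTree.nonneg_of_isPDKernel (hG : IsHomTree G n) {φ : ℕ → ℂ}
    (hφ : IsPDKernel fun x y => φ (G.dist x y)) : 0 ≤ φ 0 + n * φ 2 := by
  classical
  let := hG.locallyFinite
  obtain ⟨v⟩ := hG.1.nonempty
  have hcard : #(G.neighborFinset v) = n + 1 :=
    (G.card_neighborFinset_eq_degree v).trans (hG.isRegularOfDegree v)
  have hrow : ∀ x ∈ G.neighborFinset v,
      ∑ y ∈ G.neighborFinset v, φ (G.dist x y) = φ 0 + n * φ 2 := by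
    intro x hx
    have hdist : ∀ y ∈ (G.neighborFinset v).erase x, φ (G.dist x y) = φ 2 := by
      intro y hy
      rw [mem_erase, SimpleGraph.mem_neighborFinset] at hy
      rw [dist_eq_two_of_adj hG.isTree ((G.mem_neighborFinset v x).1 hx) hy.2 hy.1.symm]
    rw [← add_sum_erase _ _ hx, SimpleGraph.dist_self, sum_congr rfl hdist, sum_const,
      card_erase_of_mem hx, hcard, nsmul_eq_mul, Nat.add_sub_cancel]
  have hsum := hφ.sum_nonneg (G.neighborFinset v)
  rw [sum_congr rfl hrow, sum_const, hcard, nsmul_eq_mul] at hsum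
  exact le_of_mul_le_mul_left (by rwa [mul_zero]) (Nat.cast_pos.2 n.succ_pos)

lemma not_isPDKernel_phi0 (hq : q ≠ 0) (hG : IsHomTree G (q + 1)) :
    ¬ IsPDKernel fun x y => phi0 q (G.dist x y) := by
  intro h
  have hnonneg := hG.nonneg_of_isPDKernel h
  have hvalue : phi0 q 0 + ((q + 1 : ℕ) : ℂ) * phi0 q 2 = ((-(1 / q) : ℝ) : ℂ) := by
    have hq' : (q : ℂ) ≠ 0 := Nat.cast_ne_zero.2 hq
    simp only [phi0_eq_treeP_zero, treeP]
    push_cast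
    field_simp
    ring
  rw [hvalue, Complex.zero_le_real] at hnonneg
  have : 0 < 1 / (q : ℝ) := by positivity
  linarith

end HomTree

section Plant

variable {V ι α : Type*}

/-- The parent of a word in the branch with index `i`: the empty word hangs from the vertex `b i`,
and `a :: l` hangs from `l`. -/
def branchParent (b : ι → V) : ι × List α → V ⊕ ι × List α
  | (i, []) => .inl (b i)
  | (i, _ :: l) => .inr (i, l)

lemma branchParent_ne (b : ι → V) (t : ι × List α) : branchParent b t ≠ .inr t := by
  rcases t with ⟨i, _ | ⟨a, l⟩⟩ <;> simp [branchParent]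

variable (α) in
/-- The graph obtained from `G` by planting, for each index `i`, a copy of the rooted tree of words
over `α` next to the vertex `b i`. -/
def plant (G : SimpleGraph V) (b : ι → V) : SimpleGraph (V ⊕ ι × List α) where
  Adj x y := (∃ u v, G.Adj u v ∧ .inl u = x ∧ .inl v = y) ∨
    (∃ t, .inr t = x ∧ branchParent b t = y) ∨ ∃ t, .inr t = y ∧ branchParent b t = x
  symm := ⟨by
    rintro x y (⟨u, v, huv, rfl, rfl⟩ | h | h)
    exacts [.inl ⟨v, u, huv.symm, rfl, rfl⟩, .inr (.inr h), .inr (.inl h)]⟩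
  loopless := ⟨by
    rintro x (⟨u, v, huv, rfl, h⟩ | ⟨t, rfl, h⟩ | ⟨t, rfl, h⟩)
    exacts [huv.ne (Sum.inl_injective h.symm), branchParent_ne b t h, branchParent_ne b t h]⟩

variable {G : SimpleGraph V} {b : ι → V}

lemma plant_adj_inl {u v : V} (h : G.Adj u v) : (plant α G b).Adj (.inl u) (.inl v) :=
  .inl ⟨u, v, h, rfl, rfl⟩

lemma plant_adj_branchParent (t : ι × List α) :
    (plant α G b).Adj (.inr t) (branchParent b t) :=
  .inr (.inl ⟨t, rfl, rfl⟩)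

lemma plant_reachable_base (t : ι × List α) :
    (plant α G b).Reachable (.inr t) (.inl (b t.1)) := by
  obtain ⟨i, l⟩ := t
  induction l with
  | nil => exact (plant_adj_branchParent (i, [])).reachable
  | cons a l ih => exact (plant_adj_branchParent (i, a :: l)).reachable.trans ih

lemma plant_connected (hG : G.Connected) : (plant α G b).Connected := by
  obtain ⟨o⟩ := hG.nonempty
  have hbase (v : V) : (plant α G b).Reachable (.inl v) (.inl o) :=
    (hG v o).map ⟨Sum.inl, plant_adj_inl⟩
  refine SimpleGraph.connected_iff_exists_forall_reachable _ |>.2 ⟨.inl o, ?_⟩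
  rintro (v | t)
  exacts [(hbase v).symm, ((plant_reachable_base t).trans (hbase _)).symm]

/-- The inclusion of `G` is inverted by the retraction which collapses each branch to its base;
neither of the two increases distances. -/
lemma plant_dist_inl (hG : G.Connected) (x y : V) :
    (plant α G b).dist (.inl x) (.inl y) = G.dist x y := by
  apply le_antisymm
  · exact dist_le_dist_of_adj_imp (plant_connected hG) hG (fun u v huv => .inr (plant_adj_inl huv))
      x y
  · refine dist_le_dist_of_adj_imp (f := Sum.elim id fun t => b t.1) hG (plant_connected hG) ?_
      (.inl x) (.inl y)
    have hcollapse (t : ι × List α) :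
        Sum.elim id (fun t : ι × List α => b t.1) (branchParent b t) = b t.1 := by
      rcases t with ⟨i, _ | ⟨a, l⟩⟩ <;> rfl
    rintro _ _ (⟨u, v, huv, rfl, rfl⟩ | ⟨t, rfl, rfl⟩ | ⟨t, rfl, rfl⟩)
    exacts [.inr huv, .inl (hcollapse t).symm, .inl (hcollapse t)]

lemma plant_isAcyclic (hG : G.IsTree) : (plant α G b).IsAcyclic := by
  obtain ⟨o⟩ := hG.connected.nonempty
  let rank : V ⊕ ι × List α → ℕ :=
    Sum.elim (G.dist o) fun t => G.dist o (b t.1) + 1 + t.2.length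
  have hrank (t : ι × List α) : rank (.inr t) = rank (branchParent b t) + 1 := by
    rcases t with ⟨i, _ | ⟨a, l⟩⟩ <;> rfl
  refine isAcyclic_of_rank rank ?_
  rintro _ y z (⟨u, v, huv, rfl, rfl⟩ | ⟨t, rfl, rfl⟩ | ⟨t, rfl, rfl⟩)
    (⟨u', v', huv', h, rfl⟩ | ⟨t', h, rfl⟩ | ⟨t', rfl, h⟩) hy hz
  · cases h
    rw [eq_of_adj_of_dist_le hG huv huv' hy hz]
  · cases h
  · rw [hrank, h] at hz
    omega
  · cases h
  · cases h
    rfl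
  · rw [hrank, h] at hz
    omega
  all_goals
    rw [hrank] at hy
    omega

lemma plant_neighborSet_inl (v : V) : (plant α G b).neighborSet (.inl v) =
    Sum.inl '' G.neighborSet v ∪ (fun i => .inr (i, [])) '' (b ⁻¹' {v}) := by
  ext y
  constructor
  · rintro (⟨u, w, huw, h, rfl⟩ | ⟨t, h, -⟩ | ⟨⟨i, _ | ⟨a, l⟩⟩, rfl, h⟩)
    · cases h
      exact .inl ⟨w, huw, rfl⟩
    · cases h
    · exact .inr ⟨i, Sum.inl_injective h, rfl⟩
    · cases h
  · rintro (⟨w, hw, rfl⟩ | ⟨i, rfl, rfl⟩)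
    exacts [plant_adj_inl hw, (plant_adj_branchParent (i, [])).symm]

lemma plant_neighborSet_inr (i : ι) (l : List α) : (plant α G b).neighborSet (.inr (i, l)) =
    insert (branchParent b (i, l)) (Set.range fun a => .inr (i, a :: l)) := by
  ext y
  constructor
  · rintro (⟨u, w, -, h, -⟩ | ⟨t, h, rfl⟩ | ⟨⟨j, _ | ⟨a, l⟩⟩, rfl, h⟩)
    · cases h
    · cases h
      exact .inl rfl
    · cases h
    · cases h
      exact .inr ⟨a, rfl⟩
  · rintro (rfl | ⟨a, rfl⟩)
    exacts [plant_adj_branchParent (i, l), (plant_adj_branchParent (i, a :: l)).symm]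

lemma plant_encard_neighborSet_inl (v : V) : ((plant α G b).neighborSet (.inl v)).encard =
    (G.neighborSet v).encard + (b ⁻¹' {v}).encard := by
  have hinj : Function.Injective fun i : ι => (.inr (i, []) : V ⊕ ι × List α) := fun i j h => by
    cases h
    rfl
  rw [plant_neighborSet_inl, Set.encard_union_eq, Sum.inl_injective.encard_image,
    hinj.encard_image]
  rw [Set.disjoint_left]
  rintro _ ⟨w, -, rfl⟩ ⟨i, -, h⟩
  cases h

lemma plant_encard_neighborSet_inr (t : ι × List α) :
    ((plant α G b).neighborSet (.inr t)).encard = ENat.card α + 1 := by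
  obtain ⟨i, l⟩ := t
  have hinj : Function.Injective fun a : α => (.inr (i, a :: l) : V ⊕ ι × List α) := fun a c h => by
    cases h
    rfl
  rw [plant_neighborSet_inr, Set.encard_insert_of_notMem, ← Set.image_univ,
    hinj.encard_image, Set.encard_univ]
  rintro ⟨a, h⟩
  cases l <;> cases h

end Plant

section PlantHomTree

variable {V ι α : Type} {G : SimpleGraph V} {n : ℕ}

lemma isHomTree_plant {b : ι → V} (hG : G.IsTree)
    (hdeg : ∀ v, (G.neighborSet v).encard + (b ⁻¹' {v}).encard = n + 1) (hα : ENat.card α = n) :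
    IsHomTree (plant α G b) n := by
  refine ⟨plant_connected hG.connected, plant_isAcyclic hG, ?_⟩
  rintro (v | t)
  · rw [Set.ncard, plant_encard_neighborSet_inl, hdeg]
    rfl
  · rw [Set.ncard, plant_encard_neighborSet_inr, hα]
    rfl

lemma exists_isHomTree (n : ℕ) : ∃ (V : Type) (G : SimpleGraph V), IsHomTree G n :=
  ⟨_, plant (Fin n) ⊥ fun _ : Fin (n + 1) => (), isHomTree_plant .of_subsingleton
    (by simp [Set.preimage, SimpleGraph.neighborSet]) (by simp)⟩

lemma IsHomTree.plant_id (hG : IsHomTree G n) : IsHomTree (plant (Fin (n + 1)) G id) (n + 1) := by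
  refine isHomTree_plant hG.isTree (fun v => ?_) (by simp)
  rw [Set.preimage_id, Set.encard_singleton,
    ← (Set.finite_of_ncard_ne_zero (hG.2.2 v ▸ n.succ_ne_zero)).cast_ncard_eq, hG.2.2 v]

theorem isPDKernel_of_forall_isHomTree_succ {φ : ℕ → ℂ}
    (hφ : ∀ (W : Type) (H : SimpleGraph W), IsHomTree H (n + 1) →
      IsPDKernel fun x y => φ (H.dist x y))
    (hG : IsHomTree G n) : IsPDKernel fun x y => φ (G.dist x y) := by
  simpa only [plant_dist_inl hG.1] using (hφ _ _ hG.plant_id).comp Sum.inl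

end PlantHomTree

theorem stmt_5_general (q : ℕ) (hq : q ≠ 0) :
    (∀ φ : ℕ → ℂ,
        (∀ (V : Type) (G : SimpleGraph V), IsHomTree G (q+1) →
            IsPDKernel (fun x y => φ (G.dist x y))) →
        (∀ (V : Type) (G : SimpleGraph V), IsHomTree G q →
            IsPDKernel (fun x y => φ (G.dist x y)))) ∧
    (∀ (V : Type) (G : SimpleGraph V), IsHomTree G q →
        IsPDKernel (fun x y => phi0 q (G.dist x y))) ∧
    ¬(∀ (V : Type) (G : SimpleGraph V), IsHomTree G (q+1) →
        IsPDKernel (fun x y => phi0 q (G.dist x y))) := by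
  refine ⟨fun φ hφ V G hG => isPDKernel_of_forall_isHomTree_succ hφ hG,
    fun V G hG => isPDKernel_phi0 hq hG, fun h => ?_⟩
  obtain ⟨V, G, hG⟩ := exists_isHomTree (q + 1)
  exact not_isPDKernel_phi0 hq hG (h V G hG)

theorem stmt_5 (q : ℕ) (hq : 2 ≤ q) :
    (∀ φ : ℕ → ℂ,
        (∀ (V : Type) (G : SimpleGraph V), IsHomTree G (q+1) →
            IsPDKernel (fun x y => φ (G.dist x y))) →
        (∀ (V : Type) (G : SimpleGraph V), IsHomTree G q →
            IsPDKernel (fun x y => φ (G.dist x y)))) ∧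
    (∀ (V : Type) (G : SimpleGraph V), IsHomTree G q →
        IsPDKernel (fun x y => phi0 q (G.dist x y))) ∧
    ¬(∀ (V : Type) (G : SimpleGraph V), IsHomTree G (q+1) →
        IsPDKernel (fun x y => phi0 q (G.dist x y))) :=
  stmt_5_general q (by omega)
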